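/- Let r be a positive integer and let P be a Fano polygon with exactly 6 vertices v₁, …, v₆ listed in counterclockwise cyclic order, such that det(v_i, v_{i+1}) = r for every i (indices modulo 6). Then there exist M ∈ GL₂(ℤ) and an integer s with gcd(r,s) = gcd(r,s+1) = 1 such that M maps the vertex set of P onto {(0,1), (−r,s+1), (−r,s), (0,−1), (r,−s−1), (r,−s)}. -/

import Mathlib

/-!
Since `det(v_i, v_{i+1}) = det(v_{i+1}, v_{i+2}) = r`, the vector `v_i + v_{i+2}` is parallel to
the primitive vector `v_{i+1}`, so `v_i + v_{i+2} = a_i v_{i+1}` with `a_i ∈ ℤ`. Convexity, tested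
on the edge `[v_i, v_{i+1}]` against `v_{i+2}` and `v_{i+3}`, says `a_i ≤ 1` and
`(a_i - 1) a_{i+1} ≤ 1`. Together these inequalities force `a_i a_{i+1} ≤ 1`, with equality only
for `a_i = a_{i+1} = 1`.

On the other hand `det(v_i, v_{i+3}) = r (a_i a_{i+1} - 1)`, and antisymmetry of the determinant
with `v_{i+6} = v_i` gives `a_i a_{i+1} + a_{i+3} a_{i+4} = 2`. Hence all `a_i = 1`, so that
`v_{i+2} = v_{i+1} - v_i` and the hexagon is `v₀, v₁, v₁ - v₀, -v₀, -v₁, v₀ - v₁`. A unimodular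
matrix sending the primitive vector `v₀` to `(0, 1)` sends `v₁` to some `(-r, s + 1)`; the gcd
conditions express that `v₁` and `v₂` are primitive.
-/

/-- det(u,v) = u₁v₂ − u₂v₁ for u, v ∈ ℤ². -/
def det2 (u v : ℤ × ℤ) : ℤ := u.1 * v.2 - u.2 * v.1

/-- A vector of ℤ² is primitive if the gcd of its two coordinates is 1. -/
def IsPrimitive (u : ℤ × ℤ) : Prop := Int.gcd u.1 u.2 = 1

/-- `v : ZMod k → ℤ × ℤ` lists, in counterclockwise cyclic order, the vertices of a
Fano polygon: a convex lattice polygon (so k ≥ 3 and the points are in strictly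
convex position, every other vertex lying strictly to the left of each directed
edge v_i → v_{i+1}) whose vertices are primitive and whose interior contains the
origin (the origin lies strictly to the left of each directed edge, which is
exactly 0 < det(v_i, v_{i+1})). -/
def IsFanoCCW {k : ℕ} (v : ZMod k → ℤ × ℤ) : Prop :=
  3 ≤ k ∧ (∀ i, IsPrimitive (v i)) ∧ (∀ i, 0 < det2 (v i) (v (i + 1))) ∧
    ∀ i j : ZMod k, j ≠ i → j ≠ i + 1 → 0 < det2 (v (i + 1) - v i) (v j - v i)

/-- The action of an integer 2×2 matrix on ℤ². -/
def mApply (M : Matrix (Fin 2) (Fin 2) ℤ) (u : ℤ × ℤ) : ℤ × ℤ :=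
  (M 0 0 * u.1 + M 0 1 * u.2, M 1 0 * u.1 + M 1 1 * u.2)

section det2

variable {u v w x : ℤ × ℤ} {a b : ℤ}

lemma det2_self (u : ℤ × ℤ) : det2 u u = 0 := by
  rw [det2, mul_comm, sub_self]

lemma det2_swap (u v : ℤ × ℤ) : det2 v u = -det2 u v := by
  simp only [det2]
  ring

lemma det2_smul_right (a : ℤ) (u v : ℤ × ℤ) : det2 u (a • v) = a * det2 u v := by
  simp only [det2, Prod.smul_fst, Prod.smul_snd, smul_eq_mul]
  ring

lemma det2_add_right (u v w : ℤ × ℤ) : det2 u (v + w) = det2 u v + det2 u w := by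
  simp only [det2, Prod.fst_add, Prod.snd_add]
  ring

lemma det2_sub_sub (u v w : ℤ × ℤ) :
    det2 (v - u) (w - u) = det2 u v + det2 v w - det2 u w := by
  simp only [det2, Prod.fst_sub, Prod.snd_sub]
  ring

-- Cramer rule, with the denominator cleared.
lemma det2_smul_eq_add (u v x : ℤ × ℤ) : det2 u v • x = det2 x v • u + det2 u x • v := by
  ext <;>
    simp only [det2, Prod.fst_add, Prod.snd_add, Prod.smul_fst, Prod.smul_snd, smul_eq_mul] <;>
    ring

lemma det2_right_of_add_eq_smul (h : u + w = a • v) : det2 v w = det2 u v := by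
  have hw : w + u = a • v := by rw [add_comm, h]
  have hsum : det2 v w + det2 v u = 0 := by
    rw [← det2_add_right, hw, det2_smul_right, det2_self, mul_zero]
  linear_combination hsum - det2_swap u v

lemma det2_of_add_eq_smul (h : u + w = a • v) : det2 u w = a * det2 u v := by
  rw [← det2_smul_right, ← h, det2_add_right, det2_self, zero_add]

lemma det2_of_add_eq_smul_of_add_eq_smul (hw : u + w = a • v) (hx : v + x = b • w) :
    det2 u x = (a * b - 1) * det2 u v := by
  have h : det2 u v + det2 u x = b * det2 u w := by
    rw [← det2_add_right, hx, det2_smul_right]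
  linear_combination h + b * det2_of_add_eq_smul hw

lemma det2_sub_sub_of_add_eq_smul (h : u + w = a • v) :
    det2 (v - u) (w - u) = (2 - a) * det2 u v := by
  rw [det2_sub_sub, det2_right_of_add_eq_smul h, det2_of_add_eq_smul h]
  ring

lemma det2_sub_sub_of_add_eq_smul_of_add_eq_smul (hw : u + w = a • v) (hx : v + x = b • w) :
    det2 (v - u) (x - u) = (2 - (a - 1) * b) * det2 u v := by
  rw [det2_sub_sub, det2_of_add_eq_smul hx, det2_right_of_add_eq_smul hw,
    det2_of_add_eq_smul_of_add_eq_smul hw hx]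
  ring

end det2

section IsPrimitive

variable {u v w : ℤ × ℤ}

lemma isPrimitive_iff_exists_det2_eq_one : IsPrimitive u ↔ ∃ v, det2 u v = 1 := by
  rw [IsPrimitive, ← Int.isCoprime_iff_gcd_eq_one]
  constructor
  · rintro ⟨x, y, hxy⟩
    exact ⟨(-y, x), by simp only [det2]; linear_combination hxy⟩
  · rintro ⟨v, hv⟩
    exact ⟨v.2, -v.1, by simp only [det2] at hv; linear_combination hv⟩

lemma IsPrimitive.exists_eq_smul_of_det2_eq_zero (hu : IsPrimitive u) (h : det2 u v = 0) :
    ∃ a : ℤ, v = a • u := by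
  obtain ⟨w, hw⟩ := isPrimitive_iff_exists_det2_eq_one.mp hu
  exact ⟨det2 v w, by simpa [hw, h] using det2_smul_eq_add u w v⟩

lemma IsPrimitive.exists_add_eq_smul (hv : IsPrimitive v) (h : det2 u v = det2 v w) :
    ∃ a : ℤ, u + w = a • v := by
  refine hv.exists_eq_smul_of_det2_eq_zero ?_
  rw [det2_add_right, det2_swap u v, h, neg_add_cancel]

end IsPrimitive

section mApply

lemma mApply_sub (M : Matrix (Fin 2) (Fin 2) ℤ) (u v : ℤ × ℤ) :
    mApply M (u - v) = mApply M u - mApply M v := by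
  ext <;> simp only [mApply, Prod.fst_sub, Prod.snd_sub] <;> ring

lemma det2_mApply (M : Matrix (Fin 2) (Fin 2) ℤ) (u v : ℤ × ℤ) :
    det2 (mApply M u) (mApply M v) = M.det * det2 u v := by
  simp only [det2, mApply, Matrix.det_fin_two]
  ring

lemma IsPrimitive.mApply_of_isUnit_det {M : Matrix (Fin 2) (Fin 2) ℤ} {u : ℤ × ℤ}
    (hu : IsPrimitive u) (hM : IsUnit M.det) : IsPrimitive (mApply M u) := by
  obtain ⟨v, hv⟩ := isPrimitive_iff_exists_det2_eq_one.mp hu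
  obtain ⟨c, hc⟩ := hM.exists_left_inv
  refine isPrimitive_iff_exists_det2_eq_one.mpr ⟨c • mApply M v, ?_⟩
  rw [det2_smul_right, det2_mApply, hv, mul_one, hc]

lemma IsPrimitive.exists_det_eq_one_mApply_eq {u : ℤ × ℤ} (hu : IsPrimitive u) :
    ∃ M : Matrix (Fin 2) (Fin 2) ℤ, M.det = 1 ∧ mApply M u = (0, 1) := by
  obtain ⟨v, hv⟩ := isPrimitive_iff_exists_det2_eq_one.mp hu
  simp only [det2] at hv
  refine ⟨!![u.2, -u.1; v.2, -v.1], ?_, Prod.ext ?_ ?_⟩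
  · rw [Matrix.det_fin_two_of]
    linear_combination hv
  · simp [mApply, mul_comm]
  · simp only [mApply, Matrix.of_apply, Matrix.cons_val]
    linear_combination hv

lemma mApply_fst_of_mApply_eq {M : Matrix (Fin 2) (Fin 2) ℤ} {u : ℤ × ℤ}
    (hu : mApply M u = (0, 1)) (v : ℤ × ℤ) : (mApply M v).1 = -(M.det * det2 u v) := by
  have h := det2_mApply M u v
  rw [hu] at h
  rw [← h]
  simp only [det2, zero_mul, one_mul, zero_sub, neg_neg]

end mApply

section Convexity

lemma mul_le_one_of_sub_one_mul_le_one {a b : ℤ} (ha : a ≤ 1) (hb : b ≤ 1)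
    (hab : (a - 1) * b ≤ 1) : a * b ≤ 1 := by
  rcases lt_or_ge b 0 with hb0 | hb0
  · have ha0 : 0 ≤ a := by
      by_contra! hneg
      have : 2 * 1 ≤ (1 - a) * -b :=
        mul_le_mul (by omega) (by omega) zero_le_one (by omega)
      linarith
    exact (mul_nonpos_of_nonneg_of_nonpos ha0 hb0.le).trans zero_le_one
  · exact (mul_le_of_le_one_left hb0 ha).trans hb

lemma eq_one_of_sub_one_mul_le_one {a b : ℤ} (hab : (a - 1) * b ≤ 1) (h : a * b = 1) : a = 1 := by
  have hb : 0 ≤ b := by linarith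
  exact ((Int.eq_one_or_neg_one_of_mul_eq_one' h).resolve_right (by omega)).1

variable {k : ℕ} {v : ZMod k → ℤ × ℤ} {i : ZMod k} {a b : ℤ}

namespace IsFanoCCW

lemma det2_sub_sub_add_natCast_pos (hv : IsFanoCCW v) {n : ℕ} (hn : 2 ≤ n) (hnk : n < k)
    (i : ZMod k) : 0 < det2 (v (i + 1) - v i) (v (i + n) - v i) := by
  refine hv.2.2.2 i (i + n) ?_ ?_
  · rw [Ne, add_eq_left]
    exact mt (ZMod.natCast_eq_zero_iff _ _).mp (Nat.not_dvd_of_pos_of_lt (by omega) hnk)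
  · rw [Ne, add_right_inj, ← sub_eq_zero, ← Nat.cast_pred (by omega)]
    exact mt (ZMod.natCast_eq_zero_iff _ _).mp (Nat.not_dvd_of_pos_of_lt (by omega) (by omega))

lemma le_one_of_add_eq_smul (hv : IsFanoCCW v) (ha : v i + v (i + 2) = a • v (i + 1)) :
    a ≤ 1 := by
  have h : 0 < det2 (v (i + 1) - v i) (v (i + 2) - v i) := by
    simpa using hv.det2_sub_sub_add_natCast_pos le_rfl hv.1 i
  rw [det2_sub_sub_of_add_eq_smul ha] at h
  have := pos_of_mul_pos_left h (hv.2.2.1 i).le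
  omega

lemma sub_one_mul_le_one_of_add_eq_smul (hv : IsFanoCCW v) (hk : 4 ≤ k)
    (ha : v i + v (i + 2) = a • v (i + 1)) (hb : v (i + 1) + v (i + 3) = b • v (i + 2)) :
    (a - 1) * b ≤ 1 := by
  have h : 0 < det2 (v (i + 1) - v i) (v (i + 3) - v i) := by
    simpa using hv.det2_sub_sub_add_natCast_pos (n := 3) (by norm_num) hk i
  rw [det2_sub_sub_of_add_eq_smul_of_add_eq_smul ha hb] at h
  have := pos_of_mul_pos_left h (hv.2.2.1 i).le
  omega

end IsFanoCCW

end Convexity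

section Hexagon

lemma mul_add_mul_eq_two_of_add_eq_smul {v : ZMod 6 → ℤ × ℤ} {a : ZMod 6 → ℤ} {r : ℤ} (hr : r ≠ 0)
    (hdet : ∀ i, det2 (v i) (v (i + 1)) = r)
    (ha : ∀ i, v i + v (i + 2) = a i • v (i + 1)) (i : ZMod 6) :
    a i * a (i + 1) + a (i + 3) * a (i + 3 + 1) = 2 := by
  have hdiag (j : ZMod 6) : det2 (v j) (v (j + 3)) = (a j * a (j + 1) - 1) * r := by
    rw [← hdet j]
    refine det2_of_add_eq_smul_of_add_eq_smul (ha j) ?_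
    convert ha (j + 1) using 3 <;> ring_nf
  have hopp : i + 3 + 3 = i := by decide +revert
  have hneg := det2_swap (v i) (v (i + 3))
  have hdiag' := hdiag (i + 3)
  rw [hopp, hneg, hdiag i] at hdiag'
  apply mul_right_cancel₀ hr
  linear_combination -hdiag'

lemma IsFanoCCW.add_two_eq_sub {v : ZMod 6 → ℤ × ℤ} {r : ℤ} (hv : IsFanoCCW v)
    (hdet : ∀ i, det2 (v i) (v (i + 1)) = r) (i : ZMod 6) : v (i + 2) = v (i + 1) - v i := by
  have hshift (j : ZMod 6) : j + 1 + 1 = j + 2 := by ring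
  have hshift' (j : ZMod 6) : j + 1 + 2 = j + 3 := by ring
  have hexists (j : ZMod 6) : ∃ a : ℤ, v j + v (j + 2) = a • v (j + 1) := by
    refine (hv.2.1 (j + 1)).exists_add_eq_smul ?_
    rw [hdet j, ← hshift, hdet (j + 1)]
  choose a ha using hexists
  have hconv (j : ZMod 6) : (a j - 1) * a (j + 1) ≤ 1 :=
    hv.sub_one_mul_le_one_of_add_eq_smul (by norm_num) (ha j)
      (by simpa only [hshift, hshift'] using ha (j + 1))
  have hmul (j : ZMod 6) : a j * a (j + 1) ≤ 1 :=
    mul_le_one_of_sub_one_mul_le_one (hv.le_one_of_add_eq_smul (ha j))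
      (hv.le_one_of_add_eq_smul (ha (j + 1))) (hconv j)
  have hr : r ≠ 0 := hdet i ▸ (hv.2.2.1 i).ne'
  have hsum := mul_add_mul_eq_two_of_add_eq_smul hr hdet ha i
  have hai : a i = 1 :=
    eq_one_of_sub_one_mul_le_one (hconv i) (by linarith [hmul i, hmul (i + 3)])
  rw [eq_sub_iff_add_eq', ha i, hai, one_smul]

lemma range_eq_of_add_two_eq_sub {G : Type*} [AddCommGroup G] {w : ZMod 6 → G}
    (hw : ∀ i, w (i + 2) = w (i + 1) - w i) :
    Set.range w = {w 0, w 1, w 1 - w 0, -w 0, -w 1, -(w 1 - w 0)} := by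
  have hneg (i : ZMod 6) : w (i + 3) = -w i := by
    have h := hw (i + 1)
    rw [show i + 1 + 2 = i + 3 by ring, show i + 1 + 1 = i + 2 by ring, hw i] at h
    rw [h, sub_sub_cancel_left]
  have h2 : w 2 = w 1 - w 0 := hw 0
  rw [← h2, ← hneg 0, ← hneg 1, ← hneg 2]
  have hcases (i : ZMod 6) : i = 0 ∨ i = 1 ∨ i = 2 ∨ i = 0 + 3 ∨ i = 1 + 3 ∨ i = 2 + 3 := by
    decide +revert
  ext z
  simp only [Set.mem_range, Set.mem_insert_iff, Set.mem_singleton_iff]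
  constructor
  · rintro ⟨i, rfl⟩
    rcases hcases i with rfl | rfl | rfl | rfl | rfl | rfl <;> simp only [true_or, or_true]
  · rintro (rfl | rfl | rfl | rfl | rfl | rfl) <;> exact ⟨_, rfl⟩

end Hexagon

/-- a Fano polygon on 6 vertices all of whose edge cones have
determinant r has vertex set unimodular equivalent to
{(0,1), (−r,s+1), (−r,s), (0,−1), (r,−s−1), (r,−s)} with gcd(r,s) = gcd(r,s+1) = 1. -/
theorem classification_k_eq_six (r : ℤ) (hr : 0 < r)
    (v : ZMod 6 → ℤ × ℤ)
    (hF : IsFanoCCW v)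
    (hdet : ∀ i, det2 (v i) (v (i + 1)) = r) :
    ∃ (M : Matrix (Fin 2) (Fin 2) ℤ) (s : ℤ), IsUnit M.det ∧
      Int.gcd r s = 1 ∧ Int.gcd r (s + 1) = 1 ∧
      Set.range (fun i => mApply M (v i)) =
        ({(0, 1), (-r, s + 1), (-r, s), (0, -1), (r, -s - 1), (r, -s)} : Set (ℤ × ℤ)) := by
  have hrec := hF.add_two_eq_sub hdet
  have h2 : v 2 = v 1 - v 0 := hrec 0
  obtain ⟨M, hM, h0⟩ := (hF.2.1 0).exists_det_eq_one_mApply_eq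
  have hunit : IsUnit M.det := hM ▸ isUnit_one
  obtain ⟨s, hs⟩ : ∃ s, (mApply M (v 1)).2 = s + 1 := ⟨_, (sub_add_cancel _ 1).symm⟩
  have h1 : mApply M (v 1) = (-r, s + 1) :=
    Prod.ext (by rw [mApply_fst_of_mApply_eq h0, hM, one_mul]; exact congrArg Neg.neg (hdet 0)) hs
  have hprim1 : IsPrimitive (-r, s + 1) := h1 ▸ (hF.2.1 1).mApply_of_isUnit_det hunit
  have hprim2 : IsPrimitive (-r, s) := by
    simpa [h2, mApply_sub, h0, h1] using (hF.2.1 2).mApply_of_isUnit_det hunit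
  refine ⟨M, s, hunit, ?_, ?_, ?_⟩
  · simpa [IsPrimitive] using hprim2
  · simpa [IsPrimitive] using hprim1
  · rw [range_eq_of_add_two_eq_sub fun i => by rw [hrec, mApply_sub], h0, h1]
    simp [sub_eq_add_neg, add_comm]
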